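/- Let k ≥ 2 be a fixed integer. For every positive integer N, there exists a k-tree G such that impro(G) ≥ N; that is, for every improper interval edge coloring c of G there exist a vertex v and a color l ∈ ℤ with |c^{-1}(l) ∩ E_v| ≥ N. In particular, the interval coloring impropriety of k-trees is unbounded. -/

import Mathlib

/-- A (not necessarily proper) edge coloring `c : Sym2 V → ℤ` of a graph `G` is an
*improper interval edge coloring* if for every vertex `v` the set of colors of the
edges incident with `v` is an interval of integers. -/
def IsImproperIntervalColoring {V : Type*} (G : SimpleGraph V) (c : Sym2 V → ℤ) : Prop :=
  ∀ v : V, ∀ a ∈ c '' G.incidenceSet v, ∀ b ∈ c '' G.incidenceSet v,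
    ∀ x : ℤ, a ≤ x → x ≤ b → x ∈ c '' G.incidenceSet v


/-- The class of `k`-trees, defined recursively: the complete graph `K_{k+1}` is a
`k`-tree, and any graph obtained from a `k`-tree by adding one new vertex joined
exactly to the vertices of some `k`-clique is again a `k`-tree (all up to relabeling
of the vertices). -/
inductive IsKTree (k : ℕ) : (V : Type) → SimpleGraph V → Prop
  /-- The complete graph on `k + 1` vertices is a `k`-tree. -/
  | base (V : Type) (G : SimpleGraph V) (e : V ≃ Fin (k + 1))
      (hadj : ∀ x y : V, G.Adj x y ↔ x ≠ y) : IsKTree k V G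
  /-- Adding to a `k`-tree `G` one new vertex joined exactly to a `k`-clique `s` of `G`
  yields a `k`-tree. -/
  | extend (V : Type) (G : SimpleGraph V) (hG : IsKTree k V G)
      (s : Set V) (hcard : s.ncard = k) (hclique : G.IsClique s)
      (W : Type) (G' : SimpleGraph W) (f : V ⊕ Unit ≃ W)
      (h₁ : ∀ a b : V, G'.Adj (f (Sum.inl a)) (f (Sum.inl b)) ↔ G.Adj a b)
      (h₂ : ∀ a : V, G'.Adj (f (Sum.inl a)) (f (Sum.inr ())) ↔ a ∈ s) :
      IsKTree k W G'

/-!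
Take the join of `K_{k-1}` with a binary heap on `2 ^ h` vertices; this is a `k`-tree.
Every tree vertex has degree at most `k + 2`, so the colors at a tree vertex spread over an interval
of bounded length, and walking from the root to any tree vertex changes the color of the edge to a
fixed apex `u` by only `O(k h)`. Hence the `2 ^ h` edges from `u` to the tree use `O(k h)` colors,
and for large `h` some color occurs at `u` at least `N` times.
-/

open SimpleGraph

namespace IsImproperIntervalColoring

variable {V : Type*} {G : SimpleGraph V} {c : Sym2 V → ℤ}

theorem ordConnected_image_incidenceSet (hc : IsImproperIntervalColoring G c) (v : V) :
    (c '' G.incidenceSet v).OrdConnected :=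
  ⟨fun a ha b hb x hx => hc v a ha b hb x hx.1 hx.2⟩

theorem abs_sub_lt_degree (hc : IsImproperIntervalColoring G c) {v x y : V}
    [Fintype (G.neighborSet v)] (hx : G.Adj v x) (hy : G.Adj v y) :
    |c s(v, x) - c s(v, y)| < G.degree v := by
  classical
  have huIcc : ↑(Finset.uIcc (c s(v, y)) (c s(v, x))) ⊆ c '' G.incidenceSet v := by
    rw [Finset.coe_uIcc]
    exact (hc.ordConnected_image_incidenceSet v).uIcc_subset
      (Set.mem_image_of_mem c (G.mk'_mem_incidenceSet_left_iff.2 hy))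
      (Set.mem_image_of_mem c (G.mk'_mem_incidenceSet_left_iff.2 hx))
  have hcard : (c s(v, x) - c s(v, y)).natAbs + 1 ≤ G.degree v :=
    calc (c s(v, x) - c s(v, y)).natAbs + 1
        = (↑(Finset.uIcc (c s(v, y)) (c s(v, x))) : Set ℤ).ncard := by
          rw [Set.ncard_coe_finset, Int.card_uIcc]
      _ ≤ (c '' G.incidenceSet v).ncard := Set.ncard_le_ncard huIcc (Set.toFinite _)
      _ ≤ (G.incidenceSet v).ncard := Set.ncard_image_le (Set.toFinite _)
      _ = G.degree v := by
          rw [← G.card_incidenceSet_eq_degree, Set.ncard_eq_toFinset_card', Set.toFinset_card]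
  rw [Int.abs_eq_natAbs]
  exact_mod_cast hcard

theorem abs_sub_le_of_walk [G.LocallyFinite] (hc : IsImproperIntervalColoring G c) {u x y : V}
    {d : ℕ} (w : G.Walk x y) (hadj : ∀ z ∈ w.support, G.Adj u z)
    (hdeg : ∀ z ∈ w.support, G.degree z ≤ d + 1) :
    |c s(u, x) - c s(u, y)| ≤ 2 * d * w.length := by
  induction w with
  | nil => simp
  | @cons x z y hxz w ih =>
    simp only [Walk.support_cons, List.forall_mem_cons] at hadj hdeg
    have hux_xz : |c s(u, x) - c s(x, z)| ≤ d := by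
      have := hc.abs_sub_lt_degree hadj.1.symm hxz
      rw [Sym2.eq_swap (a := x) (b := u)] at this
      have := hdeg.1
      omega
    have hxz_uz : |c s(x, z) - c s(u, z)| ≤ d := by
      have := hc.abs_sub_lt_degree hxz.symm (hadj.2 z w.start_mem_support).symm
      rw [Sym2.eq_swap (a := z) (b := x), Sym2.eq_swap (a := z) (b := u)] at this
      have := hdeg.2 z w.start_mem_support
      omega
    calc |c s(u, x) - c s(u, y)|
        ≤ |c s(u, x) - c s(x, z)| + |c s(x, z) - c s(u, z)| + |c s(u, z) - c s(u, y)| :=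
          (abs_sub_le _ (c s(u, z)) _).trans (by gcongr; exact abs_sub_le _ _ _)
      _ ≤ d + d + 2 * d * w.length := by gcongr; exact ih hadj.2 hdeg.2
      _ = 2 * d * (Walk.cons hxz w).length := by rw [Walk.length_cons]; push_cast; ring

end IsImproperIntervalColoring

theorem exists_le_ncard_color_of_abs_sub_le {V : Type*} {G : SimpleGraph V} {u : V}
    [Finite (G.neighborSet u)] (c : Sym2 V → ℤ) {S : Finset V} (hS : ∀ x ∈ S, G.Adj u x)
    {a : ℤ} {D N : ℕ} (hcolor : ∀ x ∈ S, |c s(u, x) - a| ≤ D) (hcard : (2 * D + 1) * N ≤ S.card) :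
    ∃ l : ℤ, N ≤ {e | e ∈ G.incidenceSet u ∧ c e = l}.ncard := by
  classical
  have := Fintype.ofFinite (G.neighborSet u)
  have hmaps : ∀ x ∈ S, c s(u, x) ∈ Finset.Icc (a - D) (a + D) := fun x hx => by
    have := abs_le.1 (hcolor x hx)
    rw [Finset.mem_Icc]
    omega
  have hcolors : (Finset.Icc (a - D) (a + D)).card = 2 * D + 1 := by
    rw [Int.card_Icc]
    omega
  obtain ⟨l, -, hl⟩ := Finset.exists_le_card_fiber_of_mul_le_card_of_maps_to hmaps
    (Finset.card_pos.1 (by omega)) (hcolors.symm ▸ hcard)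
  have hfinite : {e | e ∈ G.incidenceSet u ∧ c e = l}.Finite :=
    (Set.toFinite (G.incidenceSet u)).subset fun _ he => he.1
  refine ⟨l, hl.trans ?_⟩
  rw [← Set.ncard_coe_finset]
  refine Set.ncard_le_ncard_of_injOn (fun x => s(u, x)) (fun x hx => ?_)
    (fun x _ y _ hxy => Sym2.congr_right.1 hxy) hfinite
  obtain ⟨hxS, hxl⟩ := Finset.mem_filter.1 hx
  exact ⟨G.mk'_mem_incidenceSet_left_iff.2 (hS x hxS), hxl⟩

/-- The join of the complete graph on the apexes `0, …, r - 1` with the tree on `r, …, m - 1` that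
is rooted at `r` and in which `p b` is the parent of `b > r`. The values of `p` on `0, …, r` are
irrelevant, since every `a < b ≤ r` is an apex. Numbering the vertices with parents first makes
each vertex after `r + 1` an `IsKTree.extend` step, so this is an `(r + 1)`-tree. -/
def coneOverTree (r : ℕ) (p : ℕ → ℕ) (m : ℕ) : SimpleGraph (Fin m) :=
  fromRel fun a b => a < b ∧ (a.val < r ∨ a.val = p b)

namespace coneOverTree

variable {r m : ℕ} {p : ℕ → ℕ}

instance : DecidableRel (coneOverTree r p m).Adj :=
  inferInstanceAs (DecidableRel (fromRel _).Adj)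

theorem adj_iff_of_lt {a b : Fin m} (hab : a < b) :
    (coneOverTree r p m).Adj a b ↔ a.val < r ∨ a.val = p b := by
  simp [coneOverTree, hab, hab.ne, hab.not_gt]

theorem adj_of_lt_of_le {a b : Fin m} (ha : a.val < r) (hb : r ≤ b.val) :
    (coneOverTree r p m).Adj a b :=
  (adj_iff_of_lt (Fin.lt_def.2 (ha.trans_le hb))).2 (.inl ha)

theorem adj_castSucc_iff {a b : Fin m} :
    (coneOverTree r p (m + 1)).Adj a.castSucc b.castSucc ↔ (coneOverTree r p m).Adj a b := by
  simp [coneOverTree]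

theorem degree_le {v : Fin m} (hv : r ≤ v.val) {children : Finset ℕ}
    (hchildren : ∀ b, v.val < b → p b = v → b ∈ children) :
    (coneOverTree r p m).degree v ≤ r + 1 + children.card := by
  have hsub : ((coneOverTree r p m).neighborFinset v).map Fin.valEmbedding ⊆
      insert (p v) (Finset.range r) ∪ children := by
    intro b hb
    obtain ⟨w, hw, rfl⟩ := Finset.mem_map.1 hb
    rw [mem_neighborFinset] at hw
    simp only [Finset.mem_union, Finset.mem_insert, Finset.mem_range, Fin.valEmbedding_apply]
    rcases hw.ne.lt_or_gt with hvw | hwv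
    · have := (adj_iff_of_lt hvw).1 hw
      exact .inr (hchildren w hvw (by omega))
    · have := (adj_iff_of_lt hwv).1 hw.symm
      omega
  calc (coneOverTree r p m).degree v
      = (((coneOverTree r p m).neighborFinset v).map Fin.valEmbedding).card := by
        rw [Finset.card_map, card_neighborFinset_eq_degree]
    _ ≤ (insert (p v) (Finset.range r) ∪ children).card := Finset.card_le_card hsub
    _ ≤ (insert (p v) (Finset.range r)).card + children.card := Finset.card_union_le _ _
    _ ≤ r + 1 + children.card := by
        gcongr
        simpa using Finset.card_insert_le (p v) (Finset.range r)

theorem ncard_apexes_insert {q : ℕ} (hrq : r ≤ q) (hqm : q < m) :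
    {a : Fin m | a.val < r ∨ a.val = q}.ncard = r + 1 := by
  have heq : {a : Fin m | a.val < r ∨ a.val = q} =
      Fin.val ⁻¹' (↑(insert q (Finset.range r)) : Set ℕ) := by
    ext a
    simp [or_comm]
  have hrange : (↑(insert q (Finset.range r)) : Set ℕ) ⊆ Set.range (Fin.val : Fin m → ℕ) := by
    intro a ha
    simp only [Finset.coe_insert, Finset.coe_range, Set.mem_insert_iff, Set.mem_Iio] at ha
    exact ⟨⟨a, by omega⟩, rfl⟩
  rw [heq, Set.ncard_preimage_of_injective_subset_range Fin.val_injective hrange,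
    Set.ncard_coe_finset, Finset.card_insert_of_notMem (by simpa using hrq), Finset.card_range]

theorem isClique_apexes_insert {q : ℕ} (hrq : r ≤ q) :
    (coneOverTree r p m).IsClique {a : Fin m | a.val < r ∨ a.val = q} := by
  intro x hx y hy hxy
  simp only [Set.mem_ofPred_eq] at hx hy
  rcases hxy.lt_or_gt with h | h
  · exact (adj_iff_of_lt h).2 (.inl (by omega))
  · exact ((adj_iff_of_lt h).2 (.inl (by omega))).symm

theorem isKTree (hp : ∀ b, r < b → r ≤ p b ∧ p b < b) (hm : r + 2 ≤ m) :
    IsKTree (r + 1) (Fin m) (coneOverTree r p m) := by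
  induction m, hm using Nat.le_induction with
  | base =>
    refine .base _ _ (Equiv.refl _) fun x y => ⟨Adj.ne, fun hxy => ?_⟩
    wlog hlt : x < y generalizing x y
    · exact (this y x hxy.symm (by omega)).symm
    rw [adj_iff_of_lt hlt]
    by_cases hxr : x.val < r
    · exact .inl hxr
    · have hy : y.val = r + 1 := by omega
      have := hp y (by omega)
      omega
  | succ m hm ih =>
    obtain ⟨hrp, hpm⟩ := hp m (by omega)
    refine .extend _ _ ih {a | a.val < r ∨ a.val = p m} (ncard_apexes_insert hrp hpm)
      (isClique_apexes_insert hrp) _ _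
      ((Equiv.optionEquivSumPUnit (Fin m)).symm.trans finSuccEquivLast.symm)
      (fun a b => ?_) (fun a => ?_)
    · simpa using adj_castSucc_iff
    · simpa using adj_iff_of_lt a.castSucc_lt_last

end coneOverTree

/-- The parent function of the infinite binary heap stored at positions `r, r + 1, …`: the children
of `a` are `2 * a + 1 - r` and `2 * a + 2 - r`. It has bounded degree and logarithmic depth. -/
def heapParent (r b : ℕ) : ℕ := (b + r - 1) / 2

section Heap

variable {r m : ℕ}

theorem le_heapParent_and_lt {b : ℕ} (hb : r < b) : r ≤ heapParent r b ∧ heapParent r b < b := by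
  unfold heapParent
  omega

theorem degree_coneOverTree_heapParent_le {v : Fin m} (hv : r ≤ v.val) :
    (coneOverTree r (heapParent r) m).degree v ≤ r + 3 := by
  refine (coneOverTree.degree_le hv (children := {2 * v.val + 1 - r, 2 * v.val + 2 - r})
    fun b hb hpb => ?_).trans (Nat.add_le_add_left Finset.card_le_two (r + 1))
  rw [Finset.mem_insert, Finset.mem_singleton]
  unfold heapParent at hpb
  omega

theorem exists_walk_root_of_lt_add_two_pow {h : ℕ} {x root : Fin m} (hroot : root.val = r)
    (hx : r ≤ x.val) (hxh : x.val < r + 2 ^ h) :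
    ∃ w : (coneOverTree r (heapParent r) m).Walk x root,
      (∀ z ∈ w.support, r ≤ z.val) ∧ w.length ≤ h := by
  induction h generalizing x with
  | zero =>
    obtain rfl : x = root := by omega
    exact ⟨.nil, by simpa using hx, le_rfl⟩
  | succ h ih =>
    rcases hx.eq_or_lt with hxr | hxr
    · obtain rfl : x = root := by omega
      exact ⟨.nil, by simpa using hx, Nat.zero_le _⟩
    obtain ⟨hle, hlt⟩ := le_heapParent_and_lt hxr
    let parent : Fin m := ⟨heapParent r x, hlt.trans x.isLt⟩
    have hparent : parent.val < r + 2 ^ h := by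
      rw [pow_succ] at hxh
      simp only [parent, heapParent]
      omega
    have hadj : (coneOverTree r (heapParent r) m).Adj x parent :=
      ((coneOverTree.adj_iff_of_lt (Fin.lt_def.2 hlt)).2 (.inr rfl)).symm
    obtain ⟨w, hw, hlen⟩ := ih hle hparent
    exact ⟨.cons hadj w, by simpa using ⟨hx, hw⟩, by simpa using hlen⟩

theorem IsImproperIntervalColoring.abs_sub_root_le {h : ℕ} {c : Sym2 (Fin m) → ℤ}
    (hc : IsImproperIntervalColoring (coneOverTree r (heapParent r) m) c)
    {apex root x : Fin m} (hapex : apex.val < r) (hroot : root.val = r)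
    (hx : r ≤ x.val) (hxh : x.val < r + 2 ^ h) :
    |c s(apex, x) - c s(apex, root)| ≤ (2 * (r + 2) * h : ℕ) := by
  obtain ⟨w, hw, hlen⟩ := exists_walk_root_of_lt_add_two_pow hroot hx hxh
  calc |c s(apex, x) - c s(apex, root)|
      ≤ 2 * (r + 2 : ℕ) * w.length := hc.abs_sub_le_of_walk w
        (fun z hz => coneOverTree.adj_of_lt_of_le hapex (hw z hz))
        (fun z hz => degree_coneOverTree_heapParent_le (hw z hz))
    _ ≤ (2 * (r + 2) * h : ℕ) := by push_cast; gcongr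

end Heap

theorem exists_mul_add_lt_two_pow (a b : ℕ) : ∃ h : ℕ, a * h + b < 2 ^ h := by
  obtain ⟨q, hq⟩ : ∃ q, q = 2 * a + b := ⟨_, rfl⟩
  refine ⟨2 * q, ?_⟩
  calc a * (2 * q) + b < (q + 1) * (q + 1) := by nlinarith
    _ ≤ 2 ^ q * 2 ^ q := Nat.mul_le_mul q.lt_two_pow_self q.lt_two_pow_self
    _ = 2 ^ (2 * q) := by ring

/-- For each fixed `k ≥ 2` and every positive integer `N`, there exists a `k`-tree `G`
with impropriety at least `N`: every improper interval edge coloring `c` of `G` has a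
vertex `v` and a color `l ∈ ℤ` with `|c⁻¹(l) ∩ E_v| ≥ N`. In particular, the interval
coloring impropriety of `k`-trees is unbounded. -/
theorem exists_kTree_with_large_impropriety (k : ℕ) (hk : 2 ≤ k) (N : ℕ) (hN : 1 ≤ N) :
    ∃ (V : Type) (G : SimpleGraph V), IsKTree k V G ∧
      ∀ c : Sym2 V → ℤ, IsImproperIntervalColoring G c →
        ∃ (v : V) (l : ℤ), N ≤ {e | e ∈ G.incidenceSet v ∧ c e = l}.ncard := by
  obtain ⟨r, rfl⟩ : ∃ r, k = r + 1 := ⟨k - 1, by omega⟩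
  obtain ⟨h, hh⟩ := exists_mul_add_lt_two_pow (4 * (r + 2) * N) N
  have htwo : 2 ≤ 2 ^ h := by omega
  refine ⟨_, _, coneOverTree.isKTree (m := r + 2 ^ h) (fun _ => le_heapParent_and_lt) (by omega),
    fun c hc => ?_⟩
  let apex : Fin (r + 2 ^ h) := ⟨0, by omega⟩
  let root : Fin (r + 2 ^ h) := ⟨r, by omega⟩
  have hroot : root.val = r := rfl
  have hle : ∀ x ∈ Finset.Ici root, r ≤ x.val := fun x hx => Fin.le_def.1 (Finset.mem_Ici.1 hx)
  have hapex : apex.val < r := by simp only [apex]; omega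
  refine ⟨apex, exists_le_ncard_color_of_abs_sub_le c (S := Finset.Ici root)
    (fun x hx => coneOverTree.adj_of_lt_of_le hapex (hle x hx))
    (fun x hx => hc.abs_sub_root_le hapex hroot (hle x hx) x.isLt) ?_⟩
  calc (2 * (2 * (r + 2) * h) + 1) * N = 4 * (r + 2) * N * h + N := by ring
    _ ≤ 2 ^ h := hh.le
    _ = (Finset.Ici root).card := by simp [root]
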